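/- Let I ⊆ ℝ be an open interval, p, q₀, r₀ : I → ℝ smooth, T₀ y = p·y'' + q₀·y' + r₀·y, and let φ₁, …, φₙ : I → ℝ be smooth with T₀φⱼ = λⱼφⱼ for pairwise distinct constants λ₁, …, λₙ. Let Wₖ(z) = det[(d/dz)^{j-1}φᵢ(z)]_{1≤i,j≤k} be the Wronskian of φ₁, …, φₖ, assumed nonvanishing on I, and set υₖ = Wₖ'/Wₖ (υ₀ = 0), w̃ₖ = υₖ - υ_{k-1}, Ãₖ y = y' - w̃ₖ·y, q̃ₖ = q₀ + k·p', r̃ₖ = r₀ + k·q₀' + ½k(k-1)·p'' + υₖ·p' + 2υₖ'·p, and T̃ₖ y = p·y'' + q̃ₖ·y' + r̃ₖ·y (with T̃₀ = T₀). Then for each k = 1, …, n and every smooth y : I → ℝ, Ãₖ(T̃_{k-1} y) = T̃ₖ(Ãₖ y) on I. -/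

import Mathlib

open Set

/-- Second-order operator `T = pD² + qD + r`. -/
noncomputable def secondOrderOp (p q r : ℝ → ℝ) (y : ℝ → ℝ) (z : ℝ) : ℝ :=
  p z * deriv (deriv y) z + q z * deriv y z + r z * y z

/-- Wronskian of the functions `φ 1, …, φ k`. -/
noncomputable def wronskian (φ : ℕ → ℝ → ℝ) (k : ℕ) (z : ℝ) : ℝ :=
  (Matrix.of fun i j : Fin k => iteratedDeriv (j : ℕ) (φ (i.1 + 1)) z).det

/-- `υ k = Wₖ'/Wₖ` (with `υ 0 = 0`, as `W₀ ≡ 1`). -/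
noncomputable def upsGauge (φ : ℕ → ℝ → ℝ) (k : ℕ) (z : ℝ) : ℝ :=
  deriv (wronskian φ k) z / wronskian φ k z

/-- `w̃ₖ = υₖ - υ_{k-1}`. -/
noncomputable def wTilde (φ : ℕ → ℝ → ℝ) (k : ℕ) (z : ℝ) : ℝ :=
  upsGauge φ k z - upsGauge φ (k - 1) z

/-- `q̃ₖ = q₀ + k p'`. -/
noncomputable def qTilde (p q₀ : ℝ → ℝ) (k : ℕ) (z : ℝ) : ℝ :=
  q₀ z + k * deriv p z

/-- `r̃ₖ = r₀ + k q₀' + ½k(k-1)p'' + υₖ p' + 2 υₖ' p`. -/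
noncomputable def rTilde (p q₀ r₀ : ℝ → ℝ) (φ : ℕ → ℝ → ℝ) (k : ℕ) (z : ℝ) : ℝ :=
  r₀ z + k * deriv q₀ z + (1 / 2 : ℝ) * k * (k - 1) * deriv (deriv p) z
    + upsGauge φ k z * deriv p z + 2 * deriv (upsGauge φ k) z * p z

/-!
For every `w` one has `(D - w) T = T̂ (D - w) + ρ'`, where `T = pD² + qD + r`, the coefficients of
`T̂` are `p`, `q + p'` and `r + q' + w p' + 2 w' p`, and `ρ = p (w' + w²) + q w + r` is the Riccati
expression of `w`. If `w = ψ'/ψ` with `Tψ = lψ`, then `ρ = l` and the error vanishes; moreover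
`D - w` then carries eigenfunctions of `T` to eigenfunctions of `T̂`, so the construction can be
iterated.

It remains to recognise the logarithmic derivative at stage `k` as `w̃ₖ₊₁`. The composition
`Ãₖ ⋯ Ã₁` is a monic differential operator of order `k` that annihilates `φ₁, …, φₖ`. Column
operations in the Wronskian then give `Wₖ₊₁ = Wₖ · ψₖ` with `ψₖ = Ãₖ ⋯ Ã₁ φₖ₊₁`, and taking
logarithmic derivatives yields `ψₖ'/ψₖ = υₖ₊₁ - υₖ = w̃ₖ₊₁`.
-/

open Filter Topology

open scoped ContDiff

section DarbouxOperators

variable {𝕜 : Type*} [NontriviallyNormedField 𝕜] {U : Set 𝕜}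

theorem contDiffOn_iteratedDeriv_of_isOpen {f : 𝕜 → 𝕜} {m n : ℕ∞ω} {j : ℕ}
    (hf : ContDiffOn 𝕜 n f U) (hU : IsOpen U) (hmn : m + j ≤ n) :
    ContDiffOn 𝕜 m (iteratedDeriv j f) U := by
  induction j generalizing m with
  | zero => simpa only [iteratedDeriv_zero] using hf.of_le (by simpa using hmn)
  | succ j ih =>
    rw [iteratedDeriv_succ]
    refine (ih (m := m + 1) ?_).deriv_of_isOpen hU le_rfl
    rwa [add_assoc, add_comm 1, ← Nat.cast_succ]

theorem contDiffAt_deriv {f : 𝕜 → 𝕜} {m n : ℕ∞ω} {z : 𝕜} (hf : ContDiffAt 𝕜 n f z)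
    (hmn : m + 1 ≤ n) : ContDiffAt 𝕜 m (deriv f) z := by
  simpa only [fderiv_apply_one_eq_deriv] using
    (hf.fderiv_right hmn).clm_apply (contDiffAt_const (c := (1 : 𝕜)))

/-- The first-order operator `D - w`. -/
noncomputable def darbouxOp (w y : 𝕜 → 𝕜) (z : 𝕜) : 𝕜 :=
  deriv y z - w z * y z

theorem darbouxOp_congr {w f g : 𝕜 → 𝕜} (hU : IsOpen U) (h : EqOn f g U) :
    EqOn (darbouxOp w f) (darbouxOp w g) U := fun z hz => by
  rw [darbouxOp, darbouxOp, h.deriv hU hz, h hz]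

theorem darbouxOp_mul {w f g : 𝕜 → 𝕜} {z : 𝕜} (hf : DifferentiableAt 𝕜 f z)
    (hg : DifferentiableAt 𝕜 g z) :
    darbouxOp w (f * g) z = darbouxOp w f z * g z + f z * deriv g z := by
  simp only [darbouxOp, deriv_mul hf hg, Pi.mul_apply]
  ring

theorem darbouxOp_sum {ι : Type*} {s : Finset ι} {w : 𝕜 → 𝕜} {f : ι → 𝕜 → 𝕜} {z : 𝕜}
    (hf : ∀ i ∈ s, DifferentiableAt 𝕜 (f i) z) :
    darbouxOp w (∑ i ∈ s, f i) z = ∑ i ∈ s, darbouxOp w (f i) z := by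
  simp only [darbouxOp, deriv_sum hf, Finset.sum_apply, Finset.mul_sum, Finset.sum_sub_distrib]

theorem contDiffOn_darbouxOp {w y : 𝕜 → 𝕜} {m n : ℕ∞ω} (hU : IsOpen U)
    (hw : ContDiffOn 𝕜 m w U) (hy : ContDiffOn 𝕜 n y U) (hmn : m + 1 ≤ n) :
    ContDiffOn 𝕜 m (darbouxOp w y) U :=
  (hy.deriv_of_isOpen hU hmn).sub (hw.mul (hy.of_le (le_self_add.trans hmn)))

/-- The composition `(D - w k) ∘ ⋯ ∘ (D - w 1)`; the entry `w 0` is ignored. -/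
noncomputable def darbouxChain (w : ℕ → 𝕜 → 𝕜) : ℕ → (𝕜 → 𝕜) → 𝕜 → 𝕜
  | 0, y => y
  | k + 1, y => darbouxOp (w (k + 1)) (darbouxChain w k y)

/-- The coefficient of `D ^ j` in `(D - w k) ∘ ⋯ ∘ (D - w 1)`, a monic operator of order `k`. -/
noncomputable def darbouxCoeff (w : ℕ → 𝕜 → 𝕜) : ℕ → ℕ → 𝕜 → 𝕜
  | 0, 0 => 1
  | 0, _ + 1 => 0
  | k + 1, 0 => darbouxOp (w (k + 1)) (darbouxCoeff w k 0)
  | k + 1, j + 1 => darbouxOp (w (k + 1)) (darbouxCoeff w k (j + 1)) + darbouxCoeff w k j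

theorem darbouxCoeff_of_lt (w : ℕ → 𝕜 → 𝕜) {k j : ℕ} (h : k < j) : darbouxCoeff w k j = 0 := by
  induction k generalizing j with
  | zero =>
    obtain ⟨j, rfl⟩ := Nat.exists_eq_add_of_lt h
    simp only [darbouxCoeff]
  | succ k ih =>
    obtain ⟨j, rfl⟩ := Nat.exists_eq_add_of_le' (Nat.one_le_of_lt h)
    funext z
    simp [darbouxCoeff, darbouxOp, ih (Nat.lt_of_succ_lt h), ih (Nat.succ_lt_succ_iff.1 h)]

theorem darbouxCoeff_self (w : ℕ → 𝕜 → 𝕜) (k : ℕ) : darbouxCoeff w k k = 1 := by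
  induction k with
  | zero => rfl
  | succ k ih =>
    funext z
    simp [darbouxCoeff, darbouxOp, ih, darbouxCoeff_of_lt w k.lt_succ_self]

variable {w : ℕ → 𝕜 → 𝕜} {N k : ℕ}

theorem contDiffOn_darbouxCoeff (hU : IsOpen U) (hk : k ≤ N)
    (hw : ∀ i ∈ Finset.Icc 1 k, ContDiffOn 𝕜 (N - i : ℕ) (w i) U) (j : ℕ) :
    ContDiffOn 𝕜 (N - k : ℕ) (darbouxCoeff w k j) U := by
  induction k generalizing j with
  | zero => cases j <;> exact contDiffOn_const
  | succ k ih =>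
    have hc := ih (by omega) fun i hi => hw i (Finset.Icc_subset_Icc_right k.le_succ hi)
    have horder : ((N - (k + 1) : ℕ) : ℕ∞ω) + 1 ≤ (N - k : ℕ) :=
      mod_cast (by omega : N - (k + 1) + 1 ≤ N - k)
    have hop (i : ℕ) := contDiffOn_darbouxOp hU (hw (k + 1) (by simp)) (hc i) horder
    cases j with
    | zero => exact hop 0
    | succ j => exact (hop (j + 1)).add ((hc j).of_le (le_self_add.trans horder))

theorem contDiffOn_darbouxChain {y : 𝕜 → 𝕜} (hU : IsOpen U) (hk : k ≤ N)
    (hw : ∀ i ∈ Finset.Icc 1 k, ContDiffOn 𝕜 (N - i : ℕ) (w i) U) (hy : ContDiffOn 𝕜 N y U) :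
    ContDiffOn 𝕜 (N - k : ℕ) (darbouxChain w k y) U := by
  induction k with
  | zero => exact hy
  | succ k ih =>
    have hchain := ih (by omega) fun i hi => hw i (Finset.Icc_subset_Icc_right k.le_succ hi)
    exact contDiffOn_darbouxOp hU (hw (k + 1) (by simp)) hchain
      (mod_cast (by omega : N - (k + 1) + 1 ≤ N - k))

theorem darbouxChain_eq_sum {y : 𝕜 → 𝕜} (hU : IsOpen U) (hk : k ≤ N)
    (hw : ∀ i ∈ Finset.Icc 1 k, ContDiffOn 𝕜 (N - i : ℕ) (w i) U) (hy : ContDiffOn 𝕜 N y U) :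
    EqOn (darbouxChain w k y)
      (∑ j ∈ Finset.range (k + 1), darbouxCoeff w k j * iteratedDeriv j y) U := by
  induction k with
  | zero => intro z _; simp [darbouxChain, darbouxCoeff]
  | succ k ih =>
    intro z hz
    have hwk : ∀ i ∈ Finset.Icc 1 k, ContDiffOn 𝕜 (N - i : ℕ) (w i) U :=
      fun i hi => hw i (Finset.Icc_subset_Icc_right k.le_succ hi)
    have hcoeff (j : ℕ) : DifferentiableAt 𝕜 (darbouxCoeff w k j) z :=
      ((contDiffOn_darbouxCoeff hU (by omega) hwk j).contDiffAt (hU.mem_nhds hz)).differentiableAt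
        (mod_cast (by omega : N - k ≠ 0))
    have hderiv (j : ℕ) (hj : j ∈ Finset.range (k + 1)) :
        DifferentiableAt 𝕜 (iteratedDeriv j y) z :=
      ((contDiffOn_iteratedDeriv_of_isOpen (m := 1) hy hU
        (mod_cast (by have := Finset.mem_range.1 hj; omega : 1 + j ≤ N))).contDiffAt
          (hU.mem_nhds hz)).differentiableAt one_ne_zero
    have hlead : darbouxOp (w (k + 1)) (darbouxCoeff w k (k + 1)) z = 0 := by
      simp [darbouxCoeff_of_lt w k.lt_succ_self, darbouxOp]
    calc darbouxChain w (k + 1) y z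
        = darbouxOp (w (k + 1))
            (∑ j ∈ Finset.range (k + 1), darbouxCoeff w k j * iteratedDeriv j y) z :=
          darbouxOp_congr hU (ih (by omega) hwk) hz
      _ = ∑ j ∈ Finset.range (k + 1),
            (darbouxOp (w (k + 1)) (darbouxCoeff w k j) z * iteratedDeriv j y z
              + darbouxCoeff w k j z * iteratedDeriv (j + 1) y z) := by
          rw [darbouxOp_sum fun j hj => (hcoeff j).mul (hderiv j hj)]
          exact Finset.sum_congr rfl fun j hj => by
            rw [darbouxOp_mul (hcoeff j) (hderiv j hj), iteratedDeriv_succ]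
      _ = ∑ j ∈ Finset.range (k + 2),
              darbouxOp (w (k + 1)) (darbouxCoeff w k j) z * iteratedDeriv j y z
            + ∑ j ∈ Finset.range (k + 1), darbouxCoeff w k j z * iteratedDeriv (j + 1) y z := by
          rw [Finset.sum_range_succ _ (k + 1), hlead, zero_mul, add_zero, Finset.sum_add_distrib]
      _ = (∑ j ∈ Finset.range (k + 2), darbouxCoeff w (k + 1) j * iteratedDeriv j y) z := by
          rw [Finset.sum_apply, Finset.sum_range_succ', Finset.sum_range_succ' _ (k + 1)]
          simp only [Pi.mul_apply, darbouxCoeff, Pi.add_apply, add_mul, Finset.sum_add_distrib]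
          ring

end DarbouxOperators

section Wronskian

theorem wronskian_zero (φ : ℕ → ℝ → ℝ) : wronskian φ 0 = 1 := by
  funext z
  simp [wronskian]

theorem upsGauge_zero (φ : ℕ → ℝ → ℝ) : upsGauge φ 0 = 0 := by
  funext z
  simp [upsGauge, wronskian_zero]

/-- Column operations put `∑ j, c j • D ^ j` in the last column, where only the last entry
survives. -/
theorem wronskian_succ_of_sum_eq_zero {φ : ℕ → ℝ → ℝ} {k : ℕ} {z : ℝ} {c : ℕ → ℝ}
    (hc : c k = 1)
    (hker : ∀ i ∈ Finset.Icc 1 k, ∑ j ∈ Finset.range (k + 1), c j * iteratedDeriv j (φ i) z = 0) :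
    wronskian φ (k + 1) z = wronskian φ k z *
      ∑ j ∈ Finset.range (k + 1), c j * iteratedDeriv j (φ (k + 1)) z := by
  set M : Matrix (Fin (k + 1)) (Fin (k + 1)) ℝ :=
    Matrix.of fun i j => iteratedDeriv (j : ℕ) (φ (i.1 + 1)) z
  set col : Fin (k + 1) → ℝ := fun i => ∑ j : Fin (k + 1), c j • M i j
  have hcol (i : Fin (k + 1)) :
      col i = ∑ j ∈ Finset.range (k + 1), c j * iteratedDeriv j (φ (i.1 + 1)) z := by
    simp [col, M, Finset.sum_range]
  have hcol_castSucc (i : Fin k) : col i.castSucc = 0 :=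
    (hcol _).trans (hker _ (by simp only [Fin.val_castSucc, Finset.mem_Icc]; omega))
  have hminor : (M.updateCol (Fin.last k) col).submatrix Fin.castSucc Fin.castSucc
      = Matrix.of fun i j : Fin k => iteratedDeriv (j : ℕ) (φ (i.1 + 1)) z := by
    ext i j
    simp [M, Fin.castSucc_ne_last]
  calc wronskian φ (k + 1) z
      = (M.updateCol (Fin.last k) col).det := by
        rw [Matrix.det_updateCol_sum M (Fin.last k) fun j => c j, Fin.val_last, hc, one_smul,
          wronskian]
    _ = wronskian φ k z * col (Fin.last k) := by
        rw [Matrix.det_succ_column _ (Fin.last k), Fin.sum_univ_castSucc]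
        simp [hcol_castSucc, Fin.succAbove_last, hminor, wronskian, ← two_mul, mul_comm]
    _ = _ := by rw [hcol, Fin.val_last]

theorem wTilde_succ_eq_logDeriv {φ : ℕ → ℝ → ℝ} {ψ : ℝ → ℝ} {k : ℕ} {z : ℝ}
    (hWψ : wronskian φ (k + 1) =ᶠ[𝓝 z] wronskian φ k * ψ)
    (hW : DifferentiableAt ℝ (wronskian φ k) z) (hψ : DifferentiableAt ℝ ψ z)
    (hW_ne : wronskian φ k z ≠ 0) (hψ_ne : ψ z ≠ 0) :
    wTilde φ (k + 1) z = logDeriv ψ z := by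
  have hlog : upsGauge φ (k + 1) z = upsGauge φ k z + logDeriv ψ z :=
    (logDeriv_congr_nhds hWψ).eq_of_nhds.trans (logDeriv_mul z hW_ne hψ_ne hW hψ)
  rw [wTilde, Nat.add_sub_cancel, hlog, add_sub_cancel_left]

theorem darbouxOp_wTilde_succ_eq_zero {φ : ℕ → ℝ → ℝ} {ψ : ℝ → ℝ} {k : ℕ} {z : ℝ}
    (hWψ : wronskian φ (k + 1) =ᶠ[𝓝 z] wronskian φ k * ψ)
    (hW : DifferentiableAt ℝ (wronskian φ k) z) (hψ : DifferentiableAt ℝ ψ z)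
    (hne : wronskian φ (k + 1) z ≠ 0) : darbouxOp (wTilde φ (k + 1)) ψ z = 0 := by
  rw [hWψ.eq_of_nhds, Pi.mul_apply, mul_ne_zero_iff] at hne
  rw [darbouxOp, wTilde_succ_eq_logDeriv hWψ hW hψ hne.1 hne.2, logDeriv_apply,
    div_mul_cancel₀ _ hne.2, sub_self]

variable {U : Set ℝ} {φ : ℕ → ℝ → ℝ} {N k : ℕ}

theorem contDiffOn_wronskian (hU : IsOpen U) (hk : k ≤ N)
    (hφ : ∀ i ∈ Finset.Icc 1 k, ContDiffOn ℝ N (φ i) U) :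
    ContDiffOn ℝ (N - k + 1 : ℕ) (wronskian φ k) U := by
  unfold wronskian
  simp only [Matrix.det_apply', Matrix.of_apply]
  refine ContDiffOn.sum fun σ _ => contDiffOn_const.mul (contDiffOn_prod fun i _ => ?_)
  exact contDiffOn_iteratedDeriv_of_isOpen (hφ _ (by simp only [Finset.mem_Icc]; omega)) hU
    (mod_cast (by omega : N - k + 1 + i ≤ N))

theorem contDiffOn_upsGauge (hU : IsOpen U) (hk : k ≤ N)
    (hφ : ∀ i ∈ Finset.Icc 1 k, ContDiffOn ℝ N (φ i) U)
    (hW : ∀ z ∈ U, wronskian φ k z ≠ 0) : ContDiffOn ℝ (N - k : ℕ) (upsGauge φ k) U :=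
  have h := contDiffOn_wronskian hU hk hφ
  (h.deriv_of_isOpen hU (by norm_cast)).div (h.of_le (mod_cast Nat.le_succ _)) hW

theorem wronskian_ne_zero_of_le (hW : ∀ i ∈ Finset.Icc 1 k, ∀ z ∈ U, wronskian φ i z ≠ 0)
    {i : ℕ} (hi : i ≤ k) {z : ℝ} (hz : z ∈ U) : wronskian φ i z ≠ 0 := by
  rcases i.eq_zero_or_pos with rfl | hpos
  · simp [wronskian_zero]
  · exact hW i (Finset.mem_Icc.2 ⟨hpos, hi⟩) z hz

theorem contDiffOn_wTilde (hU : IsOpen U) (hk : k ≤ N)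
    (hφ : ∀ i ∈ Finset.Icc 1 k, ContDiffOn ℝ N (φ i) U)
    (hW : ∀ i ∈ Finset.Icc 1 k, ∀ z ∈ U, wronskian φ i z ≠ 0) {i : ℕ} (hi : i ≤ k) :
    ContDiffOn ℝ (N - i : ℕ) (wTilde φ i) U :=
  have hυ {j : ℕ} (hj : j ≤ k) : ContDiffOn ℝ (N - j : ℕ) (upsGauge φ j) U :=
    contDiffOn_upsGauge hU (hj.trans hk)
      (fun m hm => hφ m (Finset.Icc_subset_Icc_right hj hm))
      (fun _ => wronskian_ne_zero_of_le hW hj)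
  (hυ hi).sub ((hυ (i.pred_le.trans hi)).of_le (mod_cast Nat.sub_le_sub_left i.pred_le N))

theorem wronskian_succ_eq_mul_darbouxChain {w : ℕ → ℝ → ℝ} (hU : IsOpen U) (hk : k ≤ N)
    (hφ : ∀ i ∈ Finset.Icc 1 (k + 1), ContDiffOn ℝ N (φ i) U)
    (hw : ∀ i ∈ Finset.Icc 1 k, ContDiffOn ℝ (N - i : ℕ) (w i) U)
    (hker : ∀ i ∈ Finset.Icc 1 k, EqOn (darbouxChain w k (φ i)) 0 U) :
    EqOn (wronskian φ (k + 1)) (wronskian φ k * darbouxChain w k (φ (k + 1))) U := by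
  intro z hz
  have hsum (i : ℕ) (hi : i ∈ Finset.Icc 1 (k + 1)) : darbouxChain w k (φ i) z
      = ∑ j ∈ Finset.range (k + 1), darbouxCoeff w k j z * iteratedDeriv j (φ i) z := by
    simpa only [Finset.sum_apply, Pi.mul_apply] using
      darbouxChain_eq_sum hU hk hw (hφ i hi) hz
  rw [Pi.mul_apply, hsum (k + 1) (by simp)]
  refine wronskian_succ_of_sum_eq_zero (congrFun (darbouxCoeff_self w k) z) fun i hi => ?_
  rw [← hsum i (Finset.Icc_subset_Icc_right k.le_succ hi), hker i hi hz, Pi.zero_apply]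

theorem darbouxChain_wTilde_eq_zero (hU : IsOpen U) (hk : k ≤ N)
    (hφ : ∀ i ∈ Finset.Icc 1 k, ContDiffOn ℝ N (φ i) U)
    (hW : ∀ i ∈ Finset.Icc 1 k, ∀ z ∈ U, wronskian φ i z ≠ 0) {i : ℕ}
    (hi : i ∈ Finset.Icc 1 k) : EqOn (darbouxChain (wTilde φ) k (φ i)) 0 U := by
  induction k generalizing i with
  | zero => simp at hi
  | succ k ih =>
    have hsub : Finset.Icc 1 k ⊆ Finset.Icc 1 (k + 1) := Finset.Icc_subset_Icc_right k.le_succ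
    have hker (j : ℕ) (hj : j ∈ Finset.Icc 1 k) : EqOn (darbouxChain (wTilde φ) k (φ j)) 0 U :=
      ih (by omega) (fun m hm => hφ m (hsub hm)) (fun m hm => hW m (hsub hm)) hj
    have hw (j : ℕ) (hj : j ∈ Finset.Icc 1 k) : ContDiffOn ℝ (N - j : ℕ) (wTilde φ j) U :=
      contDiffOn_wTilde hU hk hφ hW ((Finset.mem_Icc.1 hj).2.trans k.le_succ)
    intro z hz
    have hzU : U ∈ 𝓝 z := hU.mem_nhds hz
    rcases (Finset.mem_Icc.1 hi).2.eq_or_lt with rfl | hik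
    · set ψ := darbouxChain (wTilde φ) k (φ (k + 1))
      have hWψ : EqOn (wronskian φ (k + 1)) (wronskian φ k * ψ) U :=
        wronskian_succ_eq_mul_darbouxChain hU (by omega) hφ hw hker
      have hWk : DifferentiableAt ℝ (wronskian φ k) z :=
        ((contDiffOn_wronskian hU (by omega)
          fun m hm => hφ m (hsub hm)).contDiffAt hzU).differentiableAt (by norm_cast)
      have hψ : DifferentiableAt ℝ ψ z :=
        ((contDiffOn_darbouxChain hU (by omega) hw (hφ _ hi)).contDiffAt hzU).differentiableAt
          (mod_cast (by omega : N - k ≠ 0))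
      exact darbouxOp_wTilde_succ_eq_zero (hWψ.eventuallyEq_of_mem hzU) hWk hψ (hW _ hi z hz)
    · have hik' : i ∈ Finset.Icc 1 k :=
        Finset.mem_Icc.2 ⟨(Finset.mem_Icc.1 hi).1, Nat.lt_succ_iff.1 hik⟩
      calc darbouxOp (wTilde φ (k + 1)) (darbouxChain (wTilde φ) k (φ i)) z
          = darbouxOp (wTilde φ (k + 1)) 0 z := darbouxOp_congr hU (hker i hik') hz
        _ = 0 := by simp [darbouxOp]

theorem darbouxChain_wTilde_ne_zero (hU : IsOpen U) (hk : k < N)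
    (hφ : ∀ i ∈ Finset.Icc 1 (k + 1), ContDiffOn ℝ N (φ i) U)
    (hW : ∀ i ∈ Finset.Icc 1 (k + 1), ∀ z ∈ U, wronskian φ i z ≠ 0) {z : ℝ} (hz : z ∈ U) :
    darbouxChain (wTilde φ) k (φ (k + 1)) z ≠ 0 := by
  have hsub : Finset.Icc 1 k ⊆ Finset.Icc 1 (k + 1) := Finset.Icc_subset_Icc_right k.le_succ
  have hWψ := wronskian_succ_eq_mul_darbouxChain hU hk.le hφ
    (fun i hi => contDiffOn_wTilde hU hk hφ hW ((Finset.mem_Icc.1 hi).2.trans k.le_succ))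
    (fun i hi => darbouxChain_wTilde_eq_zero hU hk.le (fun m hm => hφ m (hsub hm))
      (fun m hm => hW m (hsub hm)) hi)
  exact right_ne_zero_of_mul (hWψ hz ▸ hW (k + 1) (by simp) z hz)

end Wronskian

section Intertwining

/-- The function `e^{-∫w} T e^{∫w}` for `T = pD² + qD + r`; at `w = ψ'/ψ` it is `Tψ/ψ`. -/
noncomputable def riccati (p q r w : ℝ → ℝ) (z : ℝ) : ℝ :=
  p z * (deriv w z + w z ^ 2) + q z * w z + r z

theorem riccati_eq_of_darbouxOp_eq_zero {p q r w ψ : ℝ → ℝ} {l z : ℝ}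
    (hw : DifferentiableAt ℝ w z) (hψ : DifferentiableAt ℝ ψ z) (hψ_ne : ψ z ≠ 0)
    (hker : darbouxOp w ψ =ᶠ[𝓝 z] 0) (heig : secondOrderOp p q r ψ z = l * ψ z) :
    riccati p q r w z = l := by
  have hψ' : deriv ψ =ᶠ[𝓝 z] w * ψ := hker.mono fun _ hx => sub_eq_zero.1 hx
  have hψ'' : deriv (deriv ψ) z = deriv w z * ψ z + w z * deriv ψ z :=
    hψ'.deriv_eq.trans (deriv_mul hw hψ)
  rw [secondOrderOp, hψ'', hψ'.eq_of_nhds, Pi.mul_apply] at heig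
  apply mul_right_cancel₀ hψ_ne
  rw [riccati]
  linear_combination heig

variable {p q r w y Q R : ℝ → ℝ} {z : ℝ}

theorem hasDerivAt_secondOrderOp (hp : DifferentiableAt ℝ p z) (hq : DifferentiableAt ℝ q z)
    (hr : DifferentiableAt ℝ r z) (hy : ContDiffAt ℝ 3 y z) :
    HasDerivAt (secondOrderOp p q r y)
      (deriv p z * deriv (deriv y) z + p z * deriv (deriv (deriv y)) z
        + (deriv q z * deriv y z + q z * deriv (deriv y) z)
        + (deriv r z * y z + r z * deriv y z)) z := by
  have hy' : ContDiffAt ℝ 2 (deriv y) z := contDiffAt_deriv hy (by norm_num)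
  have hy'' : ContDiffAt ℝ 1 (deriv (deriv y)) z := contDiffAt_deriv hy' (by norm_num)
  exact ((hp.hasDerivAt.mul (hy''.differentiableAt (by simp)).hasDerivAt).add
    (hq.hasDerivAt.mul (hy'.differentiableAt (by simp)).hasDerivAt)).add
      (hr.hasDerivAt.mul (hy.differentiableAt (by simp)).hasDerivAt)

theorem hasDerivAt_riccati (hp : DifferentiableAt ℝ p z) (hq : DifferentiableAt ℝ q z)
    (hr : DifferentiableAt ℝ r z) (hw : ContDiffAt ℝ 2 w z) :
    HasDerivAt (riccati p q r w)
      (deriv p z * (deriv w z + w z ^ 2)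
        + p z * (deriv (deriv w) z + 2 * w z * deriv w z)
        + (deriv q z * w z + q z * deriv w z) + deriv r z) z := by
  have dw : HasDerivAt w (deriv w z) z := (hw.differentiableAt (by simp)).hasDerivAt
  have dw' : HasDerivAt (deriv w) (deriv (deriv w) z) z :=
    ((contDiffAt_deriv (m := 1) hw (by norm_num)).differentiableAt (by simp)).hasDerivAt
  have dw2 : HasDerivAt (fun x => w x ^ 2) (2 * w z * deriv w z) z := by
    simpa using dw.fun_pow 2
  exact ((hp.hasDerivAt.mul (dw'.add dw2)).add (hq.hasDerivAt.mul dw)).add hr.hasDerivAt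

theorem deriv_darbouxOp (hw : DifferentiableAt ℝ w z) (hy : ContDiffAt ℝ 2 y z) :
    deriv (darbouxOp w y) z = deriv (deriv y) z - (deriv w z * y z + w z * deriv y z) :=
  (((contDiffAt_deriv (m := 1) hy (by norm_num)).differentiableAt (by simp)).hasDerivAt.sub
    (hw.hasDerivAt.mul (hy.differentiableAt (by simp)).hasDerivAt)).deriv

theorem deriv_deriv_darbouxOp (hw : ContDiffAt ℝ 2 w z) (hy : ContDiffAt ℝ 3 y z) :
    deriv (deriv (darbouxOp w y)) z = deriv (deriv (deriv y)) z
      - (deriv (deriv w) z * y z + 2 * deriv w z * deriv y z + w z * deriv (deriv y) z) := by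
  have hy' : ContDiffAt ℝ 2 (deriv y) z := contDiffAt_deriv hy (by norm_num)
  have hw' : ContDiffAt ℝ 1 (deriv w) z := contDiffAt_deriv hw (by norm_num)
  have hfirst : deriv (darbouxOp w y) =ᶠ[𝓝 z]
      deriv (deriv y) - (deriv w * y + w * deriv y) := by
    filter_upwards [hw.eventually (by simp), hy.eventually (by simp)] with x hwx hyx
    exact deriv_darbouxOp (hwx.differentiableAt (by simp)) (hyx.of_le (by norm_num))
  have dy : HasDerivAt y (deriv y z) z := (hy.differentiableAt (by simp)).hasDerivAt
  have dy' : HasDerivAt (deriv y) (deriv (deriv y) z) z :=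
    (hy'.differentiableAt (by simp)).hasDerivAt
  have dy'' : HasDerivAt (deriv (deriv y)) (deriv (deriv (deriv y)) z) z :=
    ((contDiffAt_deriv (m := 1) hy' (by norm_num)).differentiableAt (by simp)).hasDerivAt
  have dw : HasDerivAt w (deriv w z) z := (hw.differentiableAt (by simp)).hasDerivAt
  have dw' : HasDerivAt (deriv w) (deriv (deriv w) z) z :=
    (hw'.differentiableAt (by simp)).hasDerivAt
  rw [hfirst.deriv_eq, (dy''.sub ((dw'.mul dy).add (dw.mul dy'))).deriv]
  ring

theorem darbouxOp_secondOrderOp (hp : DifferentiableAt ℝ p z) (hq : DifferentiableAt ℝ q z)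
    (hr : DifferentiableAt ℝ r z) (hw : ContDiffAt ℝ 2 w z) (hy : ContDiffAt ℝ 3 y z)
    (hQ : Q z = q z + deriv p z)
    (hR : R z = r z + deriv q z + w z * deriv p z + 2 * deriv w z * p z) :
    darbouxOp w (secondOrderOp p q r y) z
      = secondOrderOp p Q R (darbouxOp w y) z + deriv (riccati p q r w) z * y z := by
  have hA : deriv (darbouxOp w y) z
      = deriv (deriv y) z - (deriv w z * y z + w z * deriv y z) :=
    deriv_darbouxOp (hw.differentiableAt (by simp)) (hy.of_le (by norm_num))
  rw [secondOrderOp, deriv_deriv_darbouxOp hw hy, hA, hQ, hR,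
    (hasDerivAt_riccati hp hq hr hw).deriv, darbouxOp, darbouxOp,
    (hasDerivAt_secondOrderOp hp hq hr hy).deriv, secondOrderOp]
  ring

theorem darbouxOp_secondOrderOp_of_eigenfunction {ψ : ℝ → ℝ} {l : ℝ}
    (hp : DifferentiableAt ℝ p z) (hq : DifferentiableAt ℝ q z)
    (hr : DifferentiableAt ℝ r z) (hw : ContDiffAt ℝ 2 w z) (hy : ContDiffAt ℝ 3 y z)
    (hQ : Q z = q z + deriv p z)
    (hR : R z = r z + deriv q z + w z * deriv p z + 2 * deriv w z * p z)
    (hψ : ContDiffAt ℝ 1 ψ z) (hψ_ne : ψ z ≠ 0) (hker : darbouxOp w ψ =ᶠ[𝓝 z] 0)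
    (heig : secondOrderOp p q r ψ =ᶠ[𝓝 z] l • ψ) :
    darbouxOp w (secondOrderOp p q r y) z = secondOrderOp p Q R (darbouxOp w y) z := by
  have hric : riccati p q r w =ᶠ[𝓝 z] fun _ => l := by
    filter_upwards [hw.eventually (by simp), hψ.eventually (by simp),
      hψ.continuousAt.eventually_ne hψ_ne, hker.eventuallyEq_nhds, heig]
      with x hwx hψx hψx_ne hkerx heigx
    exact riccati_eq_of_darbouxOp_eq_zero (hwx.differentiableAt (by simp))
      (hψx.differentiableAt (by simp)) hψx_ne hkerx heigx
  rw [darbouxOp_secondOrderOp hp hq hr hw hy hQ hR, hric.deriv_eq, deriv_const, zero_mul,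
    add_zero]

theorem secondOrderOp_darbouxOp_eq_smul {f : ℝ → ℝ} {l : ℝ}
    (hf : DifferentiableAt ℝ f z) (heig : secondOrderOp p q r f =ᶠ[𝓝 z] l • f)
    (hcomm : darbouxOp w (secondOrderOp p q r f) z = secondOrderOp p Q R (darbouxOp w f) z) :
    secondOrderOp p Q R (darbouxOp w f) z = l * darbouxOp w f z := by
  rw [← hcomm, darbouxOp, darbouxOp, heig.deriv_eq, heig.eq_of_nhds, deriv_const_smul _ hf,
    Pi.smul_apply, smul_eq_mul, smul_eq_mul]
  ring

end Intertwining

section DarbouxSequence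

variable {p q₀ r₀ : ℝ → ℝ} {φ : ℕ → ℝ → ℝ} {U : Set ℝ} {k : ℕ} {z : ℝ}

theorem qTilde_zero (p q₀ : ℝ → ℝ) : qTilde p q₀ 0 = q₀ := by
  funext z
  simp [qTilde]

theorem rTilde_zero (p q₀ r₀ : ℝ → ℝ) (φ : ℕ → ℝ → ℝ) : rTilde p q₀ r₀ φ 0 = r₀ := by
  funext z
  simp [rTilde, upsGauge_zero]

theorem qTilde_succ (p q₀ : ℝ → ℝ) (k : ℕ) (z : ℝ) :
    qTilde p q₀ (k + 1) z = qTilde p q₀ k z + deriv p z := by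
  simp only [qTilde, Nat.cast_succ]
  ring

theorem rTilde_succ (hp : DifferentiableAt ℝ (deriv p) z) (hq₀ : DifferentiableAt ℝ q₀ z)
    (hυ : DifferentiableAt ℝ (upsGauge φ k) z)
    (hυ' : DifferentiableAt ℝ (upsGauge φ (k + 1)) z) :
    rTilde p q₀ r₀ φ (k + 1) z = rTilde p q₀ r₀ φ k z + deriv (qTilde p q₀ k) z
      + wTilde φ (k + 1) z * deriv p z + 2 * deriv (wTilde φ (k + 1)) z * p z := by
  have hq' : deriv (qTilde p q₀ k) z = deriv q₀ z + k * deriv (deriv p) z :=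
    (hq₀.hasDerivAt.add (hp.hasDerivAt.const_mul (k : ℝ))).deriv
  have hw' : deriv (wTilde φ (k + 1)) z = deriv (upsGauge φ (k + 1)) z - deriv (upsGauge φ k) z :=
    (hυ'.hasDerivAt.sub hυ.hasDerivAt).deriv
  rw [hq', hw', rTilde, rTilde, wTilde, Nat.add_sub_cancel]
  push_cast
  ring

theorem differentiableAt_qTilde (hp : ContDiffAt ℝ 2 p z) (hq₀ : DifferentiableAt ℝ q₀ z) :
    DifferentiableAt ℝ (qTilde p q₀ k) z :=
  hq₀.add (((contDiffAt_deriv (m := 1) hp (by norm_num)).differentiableAt (by simp)).const_mul _)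

theorem differentiableAt_rTilde (hp : ContDiffAt ℝ 3 p z) (hq₀ : ContDiffAt ℝ 2 q₀ z)
    (hr₀ : DifferentiableAt ℝ r₀ z) (hυ : ContDiffAt ℝ 2 (upsGauge φ k) z) :
    DifferentiableAt ℝ (rTilde p q₀ r₀ φ k) z := by
  have hderiv {f : ℝ → ℝ} (hf : ContDiffAt ℝ 2 f z) : DifferentiableAt ℝ (deriv f) z :=
    (contDiffAt_deriv (m := 1) hf (by norm_num)).differentiableAt (by simp)
  have hp' : ContDiffAt ℝ 2 (deriv p) z := contDiffAt_deriv hp (by norm_num)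
  exact (((hr₀.add ((hderiv hq₀).const_mul _)).add ((hderiv hp').const_mul _)).add
    ((hυ.differentiableAt (by simp)).mul (hp'.differentiableAt (by simp)))).add
      (((hderiv hυ).const_mul _).mul (hp.differentiableAt (by simp)))

theorem darbouxOp_secondOrderOp_tilde {lam : ℝ} {y : ℝ → ℝ} (hU : IsOpen U)
    (hp : ContDiffOn ℝ 3 p U) (hq₀ : ContDiffOn ℝ 2 q₀ U) (hr₀ : ContDiffOn ℝ 1 r₀ U)
    (hφ : ∀ i ∈ Finset.Icc 1 (k + 1), ContDiffOn ℝ (k + 3 : ℕ) (φ i) U)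
    (hW : ∀ i ∈ Finset.Icc 1 (k + 1), ∀ x ∈ U, wronskian φ i x ≠ 0)
    (heig : EqOn (secondOrderOp p (qTilde p q₀ k) (rTilde p q₀ r₀ φ k)
        (darbouxChain (wTilde φ) k (φ (k + 1))))
      (lam • darbouxChain (wTilde φ) k (φ (k + 1))) U)
    (hz : z ∈ U) (hy : ContDiffAt ℝ 3 y z) :
    darbouxOp (wTilde φ (k + 1))
        (secondOrderOp p (qTilde p q₀ k) (rTilde p q₀ r₀ φ k) y) z
      = secondOrderOp p (qTilde p q₀ (k + 1)) (rTilde p q₀ r₀ φ (k + 1))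
          (darbouxOp (wTilde φ (k + 1)) y) z := by
  have hzU : U ∈ 𝓝 z := hU.mem_nhds hz
  have hp_z : ContDiffAt ℝ 3 p z := hp.contDiffAt hzU
  have hq_z : ContDiffAt ℝ 2 q₀ z := hq₀.contDiffAt hzU
  have hr_z : DifferentiableAt ℝ r₀ z := (hr₀.contDiffAt hzU).differentiableAt (by simp)
  have hυ {i : ℕ} (hi : i ≤ k + 1) : ContDiffAt ℝ 2 (upsGauge φ i) z :=
    ((contDiffOn_upsGauge hU (by omega)
      (fun j hj => hφ j (Finset.Icc_subset_Icc_right hi hj))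
      fun _ => wronskian_ne_zero_of_le hW hi).contDiffAt hzU).of_le
        (mod_cast (by omega : 2 ≤ k + 3 - i))
  have hψ : ContDiffAt ℝ 1 (darbouxChain (wTilde φ) k (φ (k + 1))) z :=
    ((contDiffOn_darbouxChain hU (by omega)
      (fun i hi => contDiffOn_wTilde hU (by omega) hφ hW
        ((Finset.mem_Icc.1 hi).2.trans k.le_succ)) (hφ (k + 1) (by simp))).contDiffAt hzU).of_le
          (mod_cast (by omega : 1 ≤ k + 3 - k))
  have hker : EqOn (darbouxChain (wTilde φ) (k + 1) (φ (k + 1))) 0 U :=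
    darbouxChain_wTilde_eq_zero hU (by omega) hφ hW (by simp)
  exact darbouxOp_secondOrderOp_of_eigenfunction (hp_z.differentiableAt (by simp))
    (differentiableAt_qTilde (hp_z.of_le (by norm_num)) (hq_z.differentiableAt (by simp)))
    (differentiableAt_rTilde hp_z hq_z hr_z (hυ k.le_succ))
    ((hυ le_rfl).sub (hυ k.le_succ)) hy (qTilde_succ p q₀ k z)
    (rTilde_succ ((contDiffAt_deriv (m := 2) hp_z (by norm_num)).differentiableAt (by simp))
      (hq_z.differentiableAt (by simp)) ((hυ k.le_succ).differentiableAt (by simp))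
      ((hυ le_rfl).differentiableAt (by simp)))
    hψ (darbouxChain_wTilde_ne_zero hU (by omega) hφ hW hz)
    (hker.eventuallyEq_of_mem hzU) (heig.eventuallyEq_of_mem hzU)

theorem secondOrderOp_darbouxChain_eq_smul {lam : ℕ → ℝ} {f : ℝ → ℝ} {l : ℝ} (hU : IsOpen U)
    (hp : ContDiffOn ℝ 3 p U) (hq₀ : ContDiffOn ℝ 2 q₀ U) (hr₀ : ContDiffOn ℝ 1 r₀ U)
    (hφ : ∀ i ∈ Finset.Icc 1 k, ContDiffOn ℝ (k + 2 : ℕ) (φ i) U)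
    (heig : ∀ i ∈ Finset.Icc 1 k, EqOn (secondOrderOp p q₀ r₀ (φ i)) (lam i • φ i) U)
    (hW : ∀ i ∈ Finset.Icc 1 k, ∀ z ∈ U, wronskian φ i z ≠ 0)
    (hf : ContDiffOn ℝ (k + 2 : ℕ) f U) (hf_eig : EqOn (secondOrderOp p q₀ r₀ f) (l • f) U) :
    EqOn (secondOrderOp p (qTilde p q₀ k) (rTilde p q₀ r₀ φ k) (darbouxChain (wTilde φ) k f))
      (l • darbouxChain (wTilde φ) k f) U := by
  induction k generalizing f l with
  | zero => simpa only [qTilde_zero, rTilde_zero, darbouxChain] using hf_eig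
  | succ k ih =>
    have hsub : Finset.Icc 1 k ⊆ Finset.Icc 1 (k + 1) := Finset.Icc_subset_Icc_right k.le_succ
    have hlast : k + 1 ∈ Finset.Icc 1 (k + 1) := by simp
    have horder : ((k + 2 : ℕ) : ℕ∞ω) ≤ (k + 1 + 2 : ℕ) := mod_cast (by omega)
    have heig_level {g : ℝ → ℝ} {m : ℝ} (hg : ContDiffOn ℝ (k + 1 + 2 : ℕ) g U)
        (hg_eig : EqOn (secondOrderOp p q₀ r₀ g) (m • g) U) :
        EqOn (secondOrderOp p (qTilde p q₀ k) (rTilde p q₀ r₀ φ k)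
          (darbouxChain (wTilde φ) k g)) (m • darbouxChain (wTilde φ) k g) U :=
      ih (fun i hi => (hφ i (hsub hi)).of_le horder) (fun i hi => heig i (hsub hi))
        (fun i hi => hW i (hsub hi)) (hg.of_le horder) hg_eig
    intro z hz
    have hzU : U ∈ 𝓝 z := hU.mem_nhds hz
    have hchain : ContDiffAt ℝ 3 (darbouxChain (wTilde φ) k f) z :=
      ((contDiffOn_darbouxChain hU (by omega)
        (fun i hi => contDiffOn_wTilde hU (by omega) hφ hW
          ((Finset.mem_Icc.1 hi).2.trans k.le_succ)) hf).contDiffAt hzU).of_le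
            (mod_cast (by omega : 3 ≤ k + 1 + 2 - k))
    exact secondOrderOp_darbouxOp_eq_smul (hchain.differentiableAt (by simp))
      ((heig_level hf hf_eig).eventuallyEq_of_mem hzU)
      (darbouxOp_secondOrderOp_tilde hU hp hq₀ hr₀ hφ hW
        (heig_level (hφ (k + 1) hlast) (heig (k + 1) hlast)) hz hchain)

end DarbouxSequence

/-- The orders of differentiability are those occurring on the two sides: `r̃ₖ` contains `p''`,
`q₀'` and `υₖ'` and is differentiated once more, and `υₖ''` involves `φⱼ` up to order `k + 2`. -/
theorem statement4_general {n : ℕ} {U : Set ℝ} (hU : IsOpen U) {p q₀ r₀ : ℝ → ℝ}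
    {φ : ℕ → ℝ → ℝ} {lam : ℕ → ℝ} (hp : ContDiffOn ℝ 3 p U) (hq₀ : ContDiffOn ℝ 2 q₀ U)
    (hr₀ : ContDiffOn ℝ 1 r₀ U)
    (hφ : ∀ j ∈ Finset.Icc 1 n, ContDiffOn ℝ (n + 2 : ℕ) (φ j) U)
    (heig : ∀ j ∈ Finset.Icc 1 n, ∀ z ∈ U, secondOrderOp p q₀ r₀ (φ j) z = lam j * φ j z)
    (hW : ∀ k ∈ Finset.Icc 1 n, ∀ z ∈ U, wronskian φ k z ≠ 0)
    {k : ℕ} (hk : k ∈ Finset.Icc 1 n) {y : ℝ → ℝ} {z : ℝ} (hz : z ∈ U)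
    (hy : ContDiffAt ℝ 3 y z) :
    darbouxOp (wTilde φ k)
        (secondOrderOp p (qTilde p q₀ (k - 1)) (rTilde p q₀ r₀ φ (k - 1)) y) z
      = secondOrderOp p (qTilde p q₀ k) (rTilde p q₀ r₀ φ k) (darbouxOp (wTilde φ k) y) z := by
  obtain ⟨k, rfl⟩ := Nat.exists_eq_add_of_le' (Finset.mem_Icc.1 hk).1
  have hkn : k + 1 ≤ n := (Finset.mem_Icc.1 hk).2
  have hsub : Finset.Icc 1 (k + 1) ⊆ Finset.Icc 1 n := Finset.Icc_subset_Icc_right hkn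
  have hsub' : Finset.Icc 1 k ⊆ Finset.Icc 1 n := Finset.Icc_subset_Icc_right (by omega)
  have hφ_le {m j : ℕ} (hm : m ≤ n + 2) (hj : j ∈ Finset.Icc 1 n) : ContDiffOn ℝ m (φ j) U :=
    (hφ j hj).of_le (mod_cast hm)
  have heig_k := secondOrderOp_darbouxChain_eq_smul hU hp hq₀ hr₀
    (fun i hi => hφ_le (by omega) (hsub' hi)) (fun i hi => heig i (hsub' hi))
    (fun i hi => hW i (hsub' hi)) (hφ_le (by omega) hk) (heig (k + 1) hk)
  exact darbouxOp_secondOrderOp_tilde hU hp hq₀ hr₀ (fun i hi => hφ_le (by omega) (hsub hi))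
    (fun i hi => hW i (hsub hi)) heig_k hz hy

/-- in the restricted gauge `b₁ = ⋯ = bₙ = 1`, the operators
`T̃ₖ = pD² + q̃ₖD + r̃ₖ` satisfy the intertwining relations `Ãₖ T̃_{k-1} = T̃ₖ Ãₖ`
with `Ãₖ y = y' - w̃ₖ y`. -/
theorem statement4 (n : ℕ) (a b : ℝ) (hab : a < b)
    (p q₀ r₀ : ℝ → ℝ) (φ : ℕ → ℝ → ℝ) (lam : ℕ → ℝ)
    (hp : ContDiffOn ℝ (⊤ : ℕ∞) p (Ioo a b)) (hq₀ : ContDiffOn ℝ (⊤ : ℕ∞) q₀ (Ioo a b))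
    (hr₀ : ContDiffOn ℝ (⊤ : ℕ∞) r₀ (Ioo a b))
    (hφ : ∀ j ∈ Finset.Icc 1 n, ContDiffOn ℝ (⊤ : ℕ∞) (φ j) (Ioo a b))
    (heig : ∀ j ∈ Finset.Icc 1 n, ∀ z ∈ Ioo a b,
      secondOrderOp p q₀ r₀ (φ j) z = lam j * φ j z)
    (hdist : ∀ j ∈ Finset.Icc 1 n, ∀ k ∈ Finset.Icc 1 n, j ≠ k → lam j ≠ lam k)
    (hW : ∀ k ∈ Finset.Icc 1 n, ∀ z ∈ Ioo a b, wronskian φ k z ≠ 0) :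
    ∀ k ∈ Finset.Icc 1 n, ∀ y : ℝ → ℝ, ContDiffOn ℝ (⊤ : ℕ∞) y (Ioo a b) →
      ∀ z ∈ Ioo a b,
        deriv (secondOrderOp p (qTilde p q₀ (k - 1)) (rTilde p q₀ r₀ φ (k - 1)) y) z
            - wTilde φ k z
              * secondOrderOp p (qTilde p q₀ (k - 1)) (rTilde p q₀ r₀ φ (k - 1)) y z
          = secondOrderOp p (qTilde p q₀ k) (rTilde p q₀ r₀ φ k)
              (fun x => deriv y x - wTilde φ k x * y x) z := by
  have hle {m : ℕ} {f : ℝ → ℝ} (hf : ContDiffOn ℝ ∞ f (Ioo a b)) : ContDiffOn ℝ m f (Ioo a b) :=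
    hf.of_le (mod_cast le_top)
  exact fun k hk y hy z hz => statement4_general isOpen_Ioo (hle hp) (hle hq₀) (hle hr₀)
    (fun j hj => hle (hφ j hj)) heig hW hk hz ((hle hy).contDiffAt (isOpen_Ioo.mem_nhds hz))
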